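/- Let C1 ⊆ F_{q^m}^n be a linear code and C2 ⊊ C1 a subcode. Then for every 1 ≤ i ≤ dim C1 − dim C2, the i-th RGRW is upper bounded by M_{R,i}(C1,C2) ≤ min{ n − dim C1, (m−1)(dim C1 − dim C2) } + i. -/

import Mathlib

open scoped BigOperators

noncomputable section

variable (q : ℕ) (Fq : Type*) {Fqm : Type*} [Field Fq] [Field Fqm] [Algebra Fq Fqm]

/-- `V = V^q`: the image of `V` under the coordinatewise `q`-th power map equals `V`
(membership in the family `Γ(F_{q^m}^n)`). -/
def IsGalClosed {n : ℕ} (V : Submodule Fqm (Fin n → Fqm)) : Prop :=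
  (fun v : Fin n → Fqm => fun i => v i ^ q) '' (V : Set (Fin n → Fqm)) =
    (V : Set (Fin n → Fqm))

/-- The `i`-th relative dimension/intersection profile (RDIP) of `C1` and `C2`. -/
noncomputable def RDIP {n : ℕ} (C1 C2 : Submodule Fqm (Fin n → Fqm)) (i : ℕ) : ℕ :=
  sSup {d : ℕ | ∃ V : Submodule Fqm (Fin n → Fqm), IsGalClosed q V ∧
    Module.finrank Fqm ↥V = i ∧
    d = Module.finrank Fqm ↥(C1 ⊓ V) - Module.finrank Fqm ↥(C2 ⊓ V)}

/-- The `i`-th relative generalized rank weight (RGRW) of `C1` and `C2`. -/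
noncomputable def RGRW {n : ℕ} (C1 C2 : Submodule Fqm (Fin n → Fqm)) (i : ℕ) : ℕ :=
  sInf {d : ℕ | ∃ V : Submodule Fqm (Fin n → Fqm), IsGalClosed q V ∧
    d = Module.finrank Fqm ↥V ∧
    i ≤ Module.finrank Fqm ↥(C1 ⊓ V) - Module.finrank Fqm ↥(C2 ⊓ V)}

/-- The rank weight `d_R(x,0)` of a vector: the `F_q`-dimension of the `F_q`-span of
its coordinates. -/
noncomputable def rankWeight {ι : Type*} (x : ι → Fqm) : ℕ :=
  Module.finrank Fq ↥(Submodule.span Fq (Set.range x))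

/-- The minimum rank distance of a (nonzero) linear code. -/
noncomputable def minRankDist {ι : Type*} (C : Submodule Fqm (ι → Fqm)) : ℕ :=
  sInf {d : ℕ | ∃ x, x ∈ C ∧ x ≠ 0 ∧ d = rankWeight Fq x}

/-- The dual code with respect to the standard bilinear form `⟨x,y⟩ = ∑ i, x i * y i`. -/
def dualCode {n : ℕ} (V : Submodule Fqm (Fin n → Fqm)) : Submodule Fqm (Fin n → Fqm) where
  carrier := {x | ∀ v ∈ V, ∑ i, x i * v i = 0}
  add_mem' := by
    intro a b ha hb v hv
    have h1 := ha v hv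
    have h2 := hb v hv
    simp only [Set.mem_setOf_eq] at *
    simp only [Pi.add_apply, add_mul]
    rw [Finset.sum_add_distrib, h1, h2, add_zero]
  zero_mem' := by
    intro v hv
    simp
  smul_mem' := by
    intro c x hx v hv
    have h := hx v hv
    simp only [Set.mem_setOf_eq] at *
    simp only [Pi.smul_apply, smul_eq_mul, mul_assoc]
    rw [← Finset.mul_sum, h, mul_zero]

/-!
A subspace spanned by vectors with entries in `Fq` is Galois closed, since the Frobenius fixes them.

Choose `C2 ≤ D` with `dim D = dim C1 - i`. Modulo `D` some of the standard basis vectors form a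
basis, so they span a Galois closed complement `V` of `D`. It has dimension `n - dim C1 + i`, meets
`C2` trivially, and meets `C1` in dimension at least `dim C1 + dim V - n = i`. This gives the first
bound.

For the second, take an `i`-dimensional `W ≤ C1` disjoint from `C2`. Expanding the entries of a
basis of `W` in a basis of `Fqm` over `Fq` puts `W` inside the `Fqm`-span `V` of `m i` vectors with
entries in `Fq`. As `C2 ⊓ V` and `W` are disjoint inside `C1 ⊓ V`, the weight is at most
`m i = (m - 1) i + i`.
-/

open Module Submodule

section LinearAlgebra

variable {K E : Type*} [Field K] [AddCommGroup E] [Module K E]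

theorem exists_subset_isCompl_span (D : Submodule K E) {S : Set E} (hS : span K S = ⊤) :
    ∃ T ⊆ S, IsCompl D (span K T) := by
  obtain ⟨T, hTS, -, hspan, hindep⟩ :=
    exists_linearIndepOn_extension (linearIndepOn_empty K D.mkQ) (Set.empty_subset S)
  refine ⟨T, hTS, ?_, ?_⟩
  · simpa only [Subtype.range_coe, ker_mkQ] using (Submodule.range_ker_disjoint hindep).symm
  · rw [codisjoint_iff, eq_top_iff, ← hS, span_le]
    intro x hx
    have hx' : D.mkQ x ∈ (span K T).map D.mkQ := by
      rw [map_span]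
      exact hspan (Set.mem_image_of_mem _ hx)
    rwa [← mem_comap, comap_map_mkQ] at hx'

variable [FiniteDimensional K E]

theorem exists_le_le_finrank_eq {U V : Submodule K E} (hUV : U ≤ V) {d : ℕ}
    (hU : finrank K U ≤ d) (hV : d ≤ finrank K V) :
    ∃ W, U ≤ W ∧ W ≤ V ∧ finrank K W = d := by
  induction d, hU using Nat.le_induction with
  | base => exact ⟨U, le_rfl, hUV, rfl⟩
  | succ d _ ih =>
    obtain ⟨W, hUW, hWV, hW⟩ := ih (by omega)
    obtain ⟨x, hxV, hxW⟩ := SetLike.exists_of_lt (hWV.lt_of_ne (by rintro rfl; omega))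
    refine ⟨W ⊔ span K {x}, le_sup_of_le_left hUW, sup_le hWV ?_, ?_⟩
    · rwa [span_singleton_le_iff_mem]
    · rw [finrank_sup_span_singleton hxW, hW]

theorem finrank_le_finrank_add_finrank_inf_of_codisjoint {D V : Submodule K E}
    (hDV : Codisjoint D V) (C : Submodule K E) :
    finrank K C ≤ finrank K D + finrank K ↥(C ⊓ V) := by
  have hCV := finrank_sup_add_finrank_inf_eq C V
  have hE := finrank_add_le_finrank_add_finrank D V
  rw [hDV.eq_top, finrank_top] at hE
  have hle := finrank_le (C ⊔ V)
  omega

theorem finrank_inf_add_finrank_le_of_disjoint {C1 C2 V W : Submodule K E} (h21 : C2 ≤ C1)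
    (hW1 : W ≤ C1) (hWV : W ≤ V) (hW2 : Disjoint C2 W) :
    finrank K ↥(C2 ⊓ V) + finrank K W ≤ finrank K ↥(C1 ⊓ V) := by
  have hdisj : C2 ⊓ V ⊓ W = ⊥ := (hW2.mono_left inf_le_left).eq_bot
  have hdim := finrank_sup_add_finrank_inf_eq (C2 ⊓ V) W
  rw [hdisj, finrank_bot, add_zero] at hdim
  rw [← hdim]
  exact finrank_mono (sup_le (inf_le_inf_right V h21) (le_inf hW1 hWV))

end LinearAlgebra

section ExtensionOfScalars

variable {k K ι κ : Type*} [Field k] [Field K] [Algebra k K] [Finite κ]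

theorem mem_span_range_algebraMap_repr (b : Basis κ k K) (x : ι → K) :
    x ∈ span K (Set.range fun a j ↦ algebraMap k K (b.repr (x j) a)) := by
  have := Fintype.ofFinite κ
  refine (mem_span_range_iff_exists_fun K).2 ⟨b, funext fun j ↦ ?_⟩
  conv_rhs => rw [← b.sum_repr (x j)]
  rw [Finset.sum_apply]
  refine Finset.sum_congr rfl fun a _ ↦ ?_
  rw [Pi.smul_apply, smul_eq_mul, mul_comm, ← Algebra.smul_def]

theorem exists_le_span_range_algebraMap [FiniteDimensional k K]
    (W : Submodule K (ι → K)) [FiniteDimensional K W] :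
    ∃ u : Fin (finrank k K) × Fin (finrank K W) → ι → k,
      W ≤ span K (Set.range fun p j ↦ algebraMap k K (u p j)) := by
  let b := finBasis k K
  let w := finBasis K W
  refine ⟨fun p j ↦ b.repr ((w p.2 : ι → K) j) p.1, ?_⟩
  have hW := congrArg (map W.subtype) w.span_eq
  rw [map_span, ← Set.range_comp, map_subtype_top] at hW
  refine hW.ge.trans (span_le.2 ?_)
  rintro _ ⟨s, rfl⟩
  refine span_mono ?_ (mem_span_range_algebraMap_repr b _)
  rintro _ ⟨a, rfl⟩
  exact ⟨(a, s), rfl⟩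

end ExtensionOfScalars

section GaloisClosed

variable [Fintype Fq] {n : ℕ}

/-- The coordinatewise `q`-th power map `v ↦ v ^ q`, bundled as a map that is semilinear with
respect to the Frobenius automorphism of the scalars; the paper's `V^q` is then the submodule
`V.map (frobeniusPi Fq ι)`. -/
def frobeniusPi (ι : Type*) [Algebra.IsAlgebraic Fq Fqm] :
    (ι → Fqm) →ₛₗ[((FiniteField.frobeniusAlgEquivOfAlgebraic Fq Fqm : Fqm ≃+* Fqm) :
      Fqm →+* Fqm)] (ι → Fqm) where
  toFun v := v ^ Fintype.card Fq
  map_add' v w := funext fun j ↦ map_add (FiniteField.frobeniusAlgHom Fq Fqm) (v j) (w j)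
  map_smul' c v := smul_pow c v _

theorem isGalClosed_span [Algebra.IsAlgebraic Fq Fqm] {S : Set (Fin n → Fqm)}
    (hS : ∀ v ∈ S, v ^ Fintype.card Fq = v) : IsGalClosed (Fintype.card Fq) (span Fqm S) := by
  have himage : frobeniusPi Fq (Fin n) '' S = S := (Set.image_congr hS).trans (Set.image_id' S)
  have hmap : (span Fqm S).map (frobeniusPi Fq (Fin n)) = span Fqm S := by rw [map_span, himage]
  exact congrArg SetLike.coe hmap

theorem exists_isGalClosed_isCompl [Algebra.IsAlgebraic Fq Fqm]
    (D : Submodule Fqm (Fin n → Fqm)) :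
    ∃ V, IsGalClosed (Fintype.card Fq) V ∧ IsCompl D V := by
  obtain ⟨T, hT, hDT⟩ := exists_subset_isCompl_span D (Pi.basisFun Fqm (Fin n)).span_eq
  refine ⟨span Fqm T, isGalClosed_span Fq fun v hv ↦ ?_, hDT⟩
  obtain ⟨j, rfl⟩ := hT hv
  rw [Pi.basisFun_apply]
  ext l
  obtain rfl | hl := eq_or_ne l j
  · simp
  · simp [hl]

theorem exists_isGalClosed_le_finrank_le [FiniteDimensional Fq Fqm]
    (W : Submodule Fqm (Fin n → Fqm)) :
    ∃ V, IsGalClosed (Fintype.card Fq) V ∧ W ≤ V ∧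
      finrank Fqm V ≤ finrank Fq Fqm * finrank Fqm W := by
  obtain ⟨u, hu⟩ := exists_le_span_range_algebraMap (k := Fq) W
  refine ⟨_, isGalClosed_span Fq ?_, hu, ?_⟩
  · rintro _ ⟨p, rfl⟩
    ext j
    rw [Pi.pow_apply, ← map_pow, FiniteField.pow_card]
  · exact (finrank_range_le_card _).trans (by simp)

end GaloisClosed

section RelativeWeight

variable {q} {n i : ℕ} {C1 C2 : Submodule Fqm (Fin n → Fqm)}

theorem RGRW_le_finrank {V : Submodule Fqm (Fin n → Fqm)} (hV : IsGalClosed q V)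
    (hi : finrank Fqm ↥(C2 ⊓ V) + i ≤ finrank Fqm ↥(C1 ⊓ V)) :
    RGRW q C1 C2 i ≤ finrank Fqm V :=
  Nat.sInf_le ⟨V, hV, rfl, Nat.le_sub_of_add_le' hi⟩

variable [Fintype Fq]

theorem RGRW_le_sub_finrank_add [Algebra.IsAlgebraic Fq Fqm]
    (hi : finrank Fqm C2 + i ≤ finrank Fqm C1) :
    RGRW (Fintype.card Fq) C1 C2 i ≤ n - finrank Fqm C1 + i := by
  obtain ⟨D, hD2, -, hD⟩ := exists_le_le_finrank_eq (d := finrank Fqm C1 - i) (le_top (a := C2))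
    (by omega) (by rw [finrank_top]; exact (Nat.sub_le _ _).trans C1.finrank_le)
  obtain ⟨V, hV, hDV⟩ := exists_isGalClosed_isCompl Fq D
  have hC2V : finrank Fqm ↥(C2 ⊓ V) = 0 := by rw [(hDV.disjoint.mono_left hD2).eq_bot, finrank_bot]
  have hC1V := finrank_le_finrank_add_finrank_inf_of_codisjoint hDV.codisjoint C1
  have hn : finrank Fqm D + finrank Fqm V = n := by simpa using finrank_add_eq_of_isCompl hDV
  have hle := RGRW_le_finrank (C1 := C1) (C2 := C2) (i := i) hV (by omega)
  omega

theorem RGRW_le_finrank_mul [FiniteDimensional Fq Fqm] (h21 : C2 ≤ C1)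
    (hi : finrank Fqm C2 + i ≤ finrank Fqm C1) :
    RGRW (Fintype.card Fq) C1 C2 i ≤ finrank Fq Fqm * i := by
  obtain ⟨W0, hW0⟩ := Submodule.exists_isCompl C2
  have hdim := finrank_le_finrank_add_finrank_inf_of_codisjoint hW0.codisjoint C1
  obtain ⟨W, -, hW, rfl⟩ := exists_le_le_finrank_eq (d := i) (bot_le (a := C1 ⊓ W0))
    (by simp) (by omega)
  obtain ⟨V, hV, hWV, hVdim⟩ := exists_isGalClosed_le_finrank_le Fq W
  have hW2 : Disjoint C2 W := hW0.disjoint.mono_right (hW.trans inf_le_right)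
  exact (RGRW_le_finrank hV (finrank_inf_add_finrank_le_of_disjoint h21
    (hW.trans inf_le_left) hWV hW2)).trans hVdim

end RelativeWeight

/-- For `1 ≤ i ≤ dim C1 - dim C2`, the `i`-th RGRW satisfies
`M_{R,i}(C1,C2) ≤ min{ n - dim C1, (m-1)(dim C1 - dim C2) } + i`. -/
theorem stmt3 (m n : ℕ) [Fintype Fq] [Fintype Fqm]
    (hq : Fintype.card Fq = q) (hm : Module.finrank Fq Fqm = m)
    (C1 C2 : Submodule Fqm (Fin n → Fqm)) (h12 : C2 < C1) :
    ∀ i, 1 ≤ i → i ≤ Module.finrank Fqm ↥C1 - Module.finrank Fqm ↥C2 →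
      RGRW q C1 C2 i ≤
        min (n - Module.finrank Fqm ↥C1)
          ((m - 1) * (Module.finrank Fqm ↥C1 - Module.finrank Fqm ↥C2)) + i := by
  subst hq hm
  intro i _ hik
  have hlt := finrank_lt_finrank_of_lt h12
  have hi : finrank Fqm C2 + i ≤ finrank Fqm C1 := by omega
  have : FiniteDimensional Fq Fqm := .of_finite
  rw [← Nat.add_min_add_right]
  refine le_min (RGRW_le_sub_finrank_add Fq hi) ?_
  calc RGRW (Fintype.card Fq) C1 C2 i
    _ ≤ finrank Fq Fqm * i := RGRW_le_finrank_mul Fq h12.le hi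
    _ = (finrank Fq Fqm - 1) * i + i := by
      rw [← Nat.succ_mul, Nat.succ_eq_add_one, Nat.sub_add_cancel finrank_pos]
    _ ≤ (finrank Fq Fqm - 1) * (finrank Fqm C1 - finrank Fqm C2) + i := by gcongr

end
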